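/- arXiv:2402.06803 — 3 statements merged into one kernel-verified Lean document; each statement's English description precedes it below -/
import Mathlib

section
/- Let G = (V,E) be a finite simple graph with V nonempty that is average hereditary. If ⌈|V| / (|V| − d(G))⌉ = ⌊d(G) + 1⌋, then χ(G) = ω(G) = ⌊d(G) + 1⌋. -/
/-!
Put `k = ⌊d(G) + 1⌋`. Turán's bound says that a graph with clique number `r` has
`r · d(G) ≤ (r - 1) · |V|`, that is `|V| / (|V| - d(G)) ≤ r`, so `⌈|V| / (|V| - d(G))⌉ ≤ ω(G)`.
In an average hereditary graph every nonempty induced subgraph has a vertex of degree at most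
its average degree, hence of degree less than `k`; deleting such vertices one after another and
colouring greedily in the reverse order gives `χ(G) ≤ k`. Together with `ω(G) ≤ χ(G)`, equality
of the two outer bounds forces `k ≤ ω(G) ≤ χ(G) ≤ k`.
-/

open SimpleGraph

/-- The average degree of a subgraph `H` of `G`: `2|E(H)|/|V(H)|`
(this is `0` when `H` has no vertices, since division by zero is zero in `ℚ`). -/
noncomputable def subAvgDeg {V : Type*} (G : SimpleGraph V) (H : G.Subgraph) : ℚ :=
  2 * H.edgeSet.ncard / H.verts.ncard

/-- The average degree of a finite simple graph `G`: `2|E|/|V|`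
(this is `0` when `V` is empty, since division by zero is zero in `ℚ`). -/
noncomputable def avgDeg {V : Type*} [Fintype V] (G : SimpleGraph V) : ℚ :=
  2 * G.edgeSet.ncard / Fintype.card V

/-- In a nonempty vertex set `s`, some vertex has at most `d(G[s])` neighbours inside `s`, which
for an average hereditary graph is at most `d(G)`, hence less than any `k > d(G)`. -/
theorem exists_low_degree {V : Type*} [Fintype V] (G : SimpleGraph V) [DecidableRel G.Adj]
    (hav : ∀ H : G.Subgraph, H.IsInduced → subAvgDeg G H ≤ avgDeg G)
    {k : ℕ} (hk : avgDeg G < k) (s : Finset V) (hs : s.Nonempty) :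
    ∃ v ∈ s, (s.filter (G.Adj v)).card < k := by
  classical
  by_contra! hcon
  set H : G.Subgraph := (⊤ : G.Subgraph).induce (s : Set V) with hH
  have hind : H.IsInduced := (Subgraph.isInduced_iff_exists_eq_induce_top H).2 ⟨_, rfl⟩
  have h1 := hav H hind
  have hverts : H.verts.ncard = s.card := by simp [hH]
  have hedge : H.edgeSet.ncard = H.coe.edgeFinset.card := by
    rw [← Subgraph.image_coe_edgeSet_coe, Set.ncard_image_of_injective _
      (Sym2.map.injective Subtype.val_injective), ← coe_edgeFinset, Set.ncard_coe_finset]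
  have hdeg : ∀ v : H.verts, k ≤ H.coe.degree v := by
    intro v
    have hv : (v : V) ∈ s := v.2
    refine (hcon v hv).trans (le_of_eq ?_)
    rw [Subgraph.coe_degree, ← Subgraph.finset_card_neighborSet_eq_degree]
    congr 1
    ext w
    simp [hH, hv]
  have hsum : s.card * k ≤ 2 * H.coe.edgeFinset.card := by
    rw [← sum_degrees_eq_twice_card_edges, ← hverts, ← Nat.card_coe_set_eq,
      Nat.card_eq_fintype_card, ← smul_eq_mul]
    exact Finset.card_nsmul_le_sum _ _ _ fun v _ => (hdeg v).trans (le_of_eq (by congr!))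
  have hpos : (0 : ℚ) < s.card := by exact_mod_cast hs.card_pos
  have h2 := h1.trans_lt hk
  rw [subAvgDeg, hverts, hedge, div_lt_iff₀ hpos] at h2
  have h3 : (s.card : ℚ) * k ≤ 2 * H.coe.edgeFinset.card := by exact_mod_cast hsum
  linarith

/-- Greedy colouring along a degeneracy order. -/
theorem colorable_of_averageHereditary {V : Type*} [Fintype V] (G : SimpleGraph V)
    (hav : ∀ H : G.Subgraph, H.IsInduced → subAvgDeg G H ≤ avgDeg G)
    {k : ℕ} (hk0 : 0 < k) (hk : avgDeg G < k) : G.Colorable k := by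
  classical
  have key : ∀ s : Finset V, ∃ c : V → Fin k, ∀ u ∈ s, ∀ v ∈ s, G.Adj u v → c u ≠ c v := by
    intro s
    induction s using Finset.strongInduction with
    | H s ih =>
      rcases s.eq_empty_or_nonempty with rfl | hs
      · exact ⟨fun _ => ⟨0, hk0⟩, by simp⟩
      obtain ⟨v, hv, hlt⟩ := exists_low_degree G hav hk s hs
      obtain ⟨c, hc⟩ := ih (s.erase v) (Finset.erase_ssubset hv)
      obtain ⟨a, ha⟩ : ∃ a, a ∉ (s.filter (G.Adj v)).image c := by
        by_contra! hall
        have h1 : (Finset.univ : Finset (Fin k)).card ≤ _ :=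
          Finset.card_le_card (fun a _ => hall a)
        have h2 := Finset.card_image_le (s := s.filter (G.Adj v)) (f := c)
        simp only [Finset.card_univ, Fintype.card_fin] at h1
        omega
      have ha' : ∀ w ∈ s, G.Adj v w → c w ≠ a := fun w hw hvw h =>
        ha (Finset.mem_image.2 ⟨w, Finset.mem_filter.2 ⟨hw, hvw⟩, h⟩)
      refine ⟨Function.update c v a, fun x hx y hy hxy => ?_⟩
      by_cases hxv : x = v
      · subst hxv
        rw [Function.update_self, Function.update_of_ne hxy.ne']
        exact (ha' y hy hxy).symm
      · by_cases hyv : y = v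
        · subst hyv
          rw [Function.update_self, Function.update_of_ne hxv]
          exact ha' x hx hxy.symm
        · rw [Function.update_of_ne hxv, Function.update_of_ne hyv]
          exact hc x (Finset.mem_erase.2 ⟨hxv, hx⟩) y (Finset.mem_erase.2 ⟨hyv, hy⟩) hxy
  obtain ⟨c, hc⟩ := key Finset.univ
  exact ⟨Coloring.mk c fun {u v} h => hc u (Finset.mem_univ _) v (Finset.mem_univ _) h⟩

/-- Turán's theorem, as a lower bound for the clique number. -/
theorem card_div_le_cliqueNum {V : Type*} [Fintype V] [Nonempty V] (G : SimpleGraph V) :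
    (Fintype.card V : ℚ) / ((Fintype.card V : ℚ) - avgDeg G) ≤ G.cliqueNum := by
  classical
  set n := Fintype.card V with hn
  set r := G.cliqueNum with hr
  have hn0 : (0 : ℚ) < n := by exact_mod_cast Fintype.card_pos
  have hr1 : 1 ≤ r := by
    obtain ⟨v⟩ := ‹Nonempty V›
    simpa using IsClique.card_le_cliqueNum (G := G) (t := {v}) (tc := by simp)
  have hfree : G.CliqueFree (r + 1) := fun t ht => by
    have := IsClique.card_le_cliqueNum (tc := ht.isClique)
    rw [ht.card_eq] at this
    omega
  have hE : 2 * r * G.edgeFinset.card ≤ (r - 1) * n ^ 2 := by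
    refine le_trans (Nat.mul_le_mul_left _ ?_) (mul_card_edgeFinset_turanGraph_le (n := n))
    rw [card_edgeFinset_turanGraph]
    exact hfree.card_edgeFinset_le
  have hE' : 2 * (r : ℚ) * G.edgeFinset.card ≤ (r - 1) * (n : ℚ) ^ 2 := by
    have := (Nat.cast_le (α := ℚ)).2 hE
    push_cast [Nat.cast_sub hr1] at this
    exact this
  have hd : avgDeg G * n = 2 * G.edgeFinset.card := by
    rw [avgDeg, ← hn, div_mul_cancel₀ _ hn0.ne', ← coe_edgeFinset, Set.ncard_coe_finset]
  have hrd : r * avgDeg G ≤ (r - 1) * n := by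
    refine le_of_mul_le_mul_right ?_ hn0
    nlinarith
  have hr0 : (0 : ℚ) < r := by exact_mod_cast hr1
  have hpos : 0 < (n : ℚ) - avgDeg G := by
    by_contra! hle
    nlinarith
  rw [div_le_iff₀ hpos]
  linarith

/-- If `G` is average hereditary (nonempty vertex set) and
`⌈|V| / (|V| − d(G))⌉ = ⌊d(G) + 1⌋`, then `χ(G) = ω(G) = ⌊d(G) + 1⌋`. -/
theorem stmt7 {V : Type*} [Fintype V] [Nonempty V] (G : SimpleGraph V)
    (hav : ∀ H : G.Subgraph, H.IsInduced → subAvgDeg G H ≤ avgDeg G)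
    (h : ⌈(Fintype.card V : ℚ) / ((Fintype.card V : ℚ) - avgDeg G)⌉ = ⌊avgDeg G + 1⌋) :
    (G.chromaticNumber.toNat : ℤ) = ⌊avgDeg G + 1⌋ ∧ (G.cliqueNum : ℤ) = ⌊avgDeg G + 1⌋ := by
  have hd0 : 0 ≤ avgDeg G := by rw [avgDeg]; positivity
  have hk : ((⌊avgDeg G⌋₊ + 1 : ℕ) : ℤ) = ⌊avgDeg G + 1⌋ := by
    rw [Int.floor_add_one, Nat.cast_add, Nat.cast_one, Int.natCast_floor_eq_floor hd0]
  have hcol : G.Colorable (⌊avgDeg G⌋₊ + 1) :=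
    colorable_of_averageHereditary G hav (Nat.succ_pos _)
      (by push_cast; exact Nat.lt_floor_add_one _)
  have hω : ⌊avgDeg G + 1⌋ ≤ (G.cliqueNum : ℤ) := by
    rw [← h, Int.ceil_le]
    exact_mod_cast card_div_le_cliqueNum G
  have hχ : G.chromaticNumber ≤ ((⌊avgDeg G⌋₊ + 1 : ℕ) : ℕ∞) := hcol.chromaticNumber_le
  have hωχ := G.cliqueNum_le_chromaticNumber
  have hfin : G.chromaticNumber ≠ ⊤ := ne_top_of_le_ne_top (ENat.natCast_ne_top _) hχ
  rw [← ENat.natCast_toNat hfin, Nat.cast_le] at hχ hωχ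
  omega
end

section
/- Let G = (V,E) be a finite simple connected graph with at least one vertex. Then ⌊d(G) + 1⌋ ≤ ⌊(3 + √(9 + 8(|E| − |V|)))/2⌋. -/
/-!
Write `n = |V|`, `m = |E|` and `k = ⌊d(G) + 1⌋`. It suffices that `2k - 3 ≤ √(9 + 8(m - n))`, which for
`k ≥ 2` amounts to `k(k - 3) ≤ 2(m - n)`. For `k = 2` this is `n - 1 ≤ m`, which holds by connectedness.
For `k ≥ 3`, the definition of `k` gives `(k - 1)n ≤ 2m`, so `(k - 3)n ≤ 2(m - n)`; and `k ≤ n` because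
`2m ≤ n(n - 1)` in a simple graph.
-/

open SimpleGraph

/-- For a finite simple connected graph `G`,
`⌊d(G) + 1⌋ ≤ ⌊(3 + √(9 + 8(|E| − |V|)))/2⌋`. -/
theorem stmt11 {V : Type*} [Fintype V] [Nonempty V] (G : SimpleGraph V)
    (hconn : G.Connected) :
    (⌊avgDeg G + 1⌋ : ℤ) ≤
      ⌊(3 + Real.sqrt (9 + 8 * ((G.edgeSet.ncard : ℝ) - (Fintype.card V : ℝ)))) / 2⌋ := by
  classical
  have hn : 0 < Fintype.card V := Fintype.card_pos
  have hE : G.edgeSet.ncard = G.edgeFinset.card := by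
    rw [← coe_edgeFinset, Set.ncard_coe_finset]
  have h1 : Fintype.card V ≤ G.edgeSet.ncard + 1 := by
    have := hconn.card_vert_le_card_edgeSet_add_one
    rwa [Nat.card_eq_fintype_card, Nat.card_coe_set_eq] at this
  have h2 : 2 * G.edgeSet.ncard ≤ Fintype.card V * (Fintype.card V - 1) := by
    have := G.card_edgeFinset_le_card_choose_two
    rw [hE]
    rw [Nat.choose_two_right] at this
    lia
  unfold avgDeg
  generalize G.edgeSet.ncard = m at *
  generalize Fintype.card V = n at *
  have hk := Int.floor_le (2 * (m : ℚ) / n + 1)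
  generalize ⌊2 * (m : ℚ) / n + 1⌋ = k at *
  have hkm : (k - 1) * (n : ℤ) ≤ 2 * m := by
    have hn' : (0 : ℚ) < n := by exact_mod_cast hn
    have h : ((k : ℚ) - 1) * n ≤ 2 * m := by
      rw [← le_div_iff₀ hn']
      linarith
    exact_mod_cast h
  have hkn : k ≤ n := by
    zify [Nat.one_le_iff_ne_zero.mpr hn.ne'] at h2 hn
    by_contra! h
    nlinarith
  rw [Int.le_floor]
  suffices h : 2 * (k : ℝ) - 3 ≤ √(9 + 8 * ((m : ℝ) - n)) by linarith
  rcases le_or_gt k 1 with hk1 | hk1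
  · have : (k : ℝ) ≤ 1 := by exact_mod_cast hk1
    linarith [Real.sqrt_nonneg (9 + 8 * ((m : ℝ) - n))]
  · have key : k * (k - 3) ≤ 2 * ((m : ℤ) - n) := by
      rcases eq_or_lt_of_le (show 2 ≤ k from hk1) with rfl | hk2
      · lia
      · nlinarith [mul_nonneg (show 0 ≤ k - 3 by lia) (sub_nonneg.mpr hkn)]
    have key' : (k : ℝ) * (k - 3) ≤ 2 * ((m : ℝ) - n) := by exact_mod_cast key
    apply Real.le_sqrt_of_sq_le
    linarith
end

section
/- Let G = (V,E) be a finite simple connected graph with at least one vertex. Then ⌊MAD(G) + 1⌋ ≤ ⌊(3 + √(9 + 8(|E| − |V|)))/2⌋. -/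
/-!
Let `H` be a subgraph with `n` vertices and `m` edges whose average degree `2m/n` is the maximum,
and let `k = ⌊2m/n + 1⌋`. Three facts bound `k`.

* `excess_mono`: since `G` is connected, `m - n ≤ |E| - |V|` when `n ≥ 1`. Fix a root in `H` and
  send each vertex outside `H` to the first edge of a shortest path to the root. This edge is not
  in `H`, and the map is injective because the distance to the root drops along it.
* `two_mul_edges_le`: `2m ≤ n(n - 1)`, so `k ≤ n`.
* By the choice of `k`, `(k - 1) n ≤ 2m`.

If `k ≥ 3`, then `2(|E| - |V|) ≥ 2(m - n) ≥ (k - 3) n ≥ (k - 3) k`, so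
`9 + 8(|E| - |V|) ≥ (2k - 3)²`, and hence `k ≤ (3 + √(9 + 8(|E| - |V|)))/2`. If `k ≤ 2`, the bound
`|E| - |V| ≥ -1` is enough, since it makes the right-hand side at least `(3 + 1)/2 = 2`.
-/

open SimpleGraph

/-- In a connected graph every vertex `v ≠ r` has a neighbour closer to `r`. -/
lemma exists_adj_dist_lt {V : Type*} {G : SimpleGraph V} (hconn : G.Connected) {v r : V}
    (hne : v ≠ r) : ∃ w, G.Adj v w ∧ G.dist w r < G.dist v r := by
  obtain ⟨p, hp⟩ := hconn.exists_walk_length_eq_dist v r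
  cases p with
  | nil => exact absurd rfl hne
  | cons h q =>
    refine ⟨_, h, ?_⟩
    have := dist_le q
    rw [Walk.length_cons] at hp
    omega

/-- The excess `|E| - |V|` of a connected graph is at least that of any nonempty subgraph,
written additively to avoid truncated subtraction. -/
lemma excess_mono {V : Type*} [Fintype V] {G : SimpleGraph V} (hconn : G.Connected)
    (H : G.Subgraph) (hne : H.verts.Nonempty) :
    H.edgeSet.ncard + Fintype.card V ≤ G.edgeSet.ncard + H.verts.ncard := by
  obtain ⟨r, hr⟩ := hne
  have hpar : ∀ v, ∃ w, v ∉ H.verts → G.Adj v w ∧ G.dist w r < G.dist v r := by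
    intro v
    by_cases hv : v ∈ H.verts
    · exact ⟨v, fun h => absurd hv h⟩
    · obtain ⟨w, hw⟩ := exists_adj_dist_lt hconn (v := v) (r := r) (fun h => hv (h ▸ hr))
      exact ⟨w, fun _ => hw⟩
  choose p hp using hpar
  have hle : (H.vertsᶜ).ncard ≤ (G.edgeSet \ H.edgeSet).ncard := by
    refine Set.ncard_le_ncard_of_injOn (fun v => s(v, p v)) ?_ ?_
    · intro v hv
      exact ⟨(hp v hv).1, fun h => hv (H.edge_vert (Subgraph.mem_edgeSet.1 h))⟩
    · intro v hv w hw h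
      rcases Sym2.eq_iff.1 h with ⟨h, _⟩ | ⟨h1, h2⟩
      · exact h
      -- Otherwise `v` and `w` are each other's parents, so each is closer to `r` than the other.
      · have a := (hp v hv).2
        have b := (hp w hw).2
        rw [h2] at a
        rw [← h1] at b
        omega
  have h1 := Set.ncard_add_ncard_compl H.verts
  have h2 := Set.ncard_sdiff_add_ncard_of_subset H.edgeSet_subset
  rw [Nat.card_eq_fintype_card] at h1
  omega

/-- A graph on `n` vertices has at most `n(n - 1)/2` edges, written additively. -/
lemma two_mul_edges_le {V : Type*} [Fintype V] {G : SimpleGraph V} (H : G.Subgraph) :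
    2 * H.edgeSet.ncard + H.verts.ncard ≤ H.verts.ncard * H.verts.ncard := by
  classical
  have hsub : H.edgeSet ⊆ (H.verts.toFinset.offDiag.image Sym2.mk.uncurry : Finset (Sym2 V)) := by
    intro e
    induction e using Sym2.ind with
    | _ a b =>
      intro h
      rw [Subgraph.mem_edgeSet] at h
      simp only [Finset.coe_image, Set.mem_image, Finset.mem_coe, Finset.mem_offDiag,
        Set.mem_toFinset]
      exact ⟨(a, b), ⟨H.edge_vert h, H.edge_vert h.symm, h.ne⟩, rfl⟩
  have h := Set.ncard_le_ncard hsub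
  rw [Set.ncard_coe_finset] at h
  have h2 := Sym2.two_mul_card_image_offDiag H.verts.toFinset
  rw [Finset.offDiag_card, ← Set.ncard_eq_toFinset_card'] at h2
  have := Nat.le_mul_self H.verts.ncard
  omega

/-- For a finite simple connected graph `G`,
`⌊MAD(G) + 1⌋ ≤ ⌊(3 + √(9 + 8(|E| − |V|)))/2⌋`. -/
theorem stmt12 {V : Type*} [Fintype V] [Nonempty V] (G : SimpleGraph V)
    (hconn : G.Connected) (mad : ℚ)
    (hub : ∀ H : G.Subgraph, subAvgDeg G H ≤ mad)
    (hmem : ∃ H : G.Subgraph, subAvgDeg G H = mad) :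
    (⌊mad + 1⌋ : ℤ) ≤
      ⌊(3 + Real.sqrt (9 + 8 * ((G.edgeSet.ncard : ℝ) - (Fintype.card V : ℝ)))) / 2⌋ := by
  obtain ⟨H, rfl⟩ := hmem
  have hc : (-1 : ℝ) ≤ (G.edgeSet.ncard : ℝ) - Fintype.card V := by
    have h := hconn.card_vert_le_card_edgeSet_add_one
    rw [Nat.card_eq_fintype_card, Nat.card_coe_set_eq] at h
    have : (Fintype.card V : ℝ) ≤ G.edgeSet.ncard + 1 := by exact_mod_cast h
    linarith
  set c : ℝ := (G.edgeSet.ncard : ℝ) - Fintype.card V with hcdef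
  have hk := Int.floor_le (subAvgDeg G H + 1)
  set k := ⌊subAvgDeg G H + 1⌋ with hkdef
  rw [Int.le_floor]
  rcases le_or_gt k 2 with hk2 | hk2
  · have h1 : (1 : ℝ) ≤ √(9 + 8 * c) := Real.one_le_sqrt.2 (by linarith)
    have h2 : (k : ℝ) ≤ 2 := by exact_mod_cast hk2
    linarith
  have hne : H.verts.Nonempty := by
    by_contra h
    rw [Set.not_nonempty_iff_eq_empty] at h
    -- Without vertices the average degree is the junk value `x / 0 = 0`, which forces `k = 1`.
    have h0 : subAvgDeg G H = 0 := by simp [subAvgDeg, h]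
    have : k = 1 := by rw [hkdef, h0]; norm_num
    omega
  have hn : 0 < H.verts.ncard := (Set.ncard_pos).2 hne
  have hex := excess_mono hconn H hne
  have hcl := two_mul_edges_le H
  have hexR : (H.edgeSet.ncard : ℝ) - H.verts.ncard ≤ c := by
    have : (H.edgeSet.ncard : ℝ) + Fintype.card V ≤ G.edgeSet.ncard + H.verts.ncard := by
      exact_mod_cast hex
    linarith
  have hdeg : (k - 1) * (H.verts.ncard : ℤ) ≤ 2 * H.edgeSet.ncard := by
    have hnq : (0 : ℚ) < H.verts.ncard := by exact_mod_cast hn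
    have h : (k : ℚ) - 1 ≤ 2 * H.edgeSet.ncard / H.verts.ncard := by
      rw [subAvgDeg] at hk
      linarith
    rw [le_div_iff₀ hnq] at h
    exact_mod_cast h
  generalize H.edgeSet.ncard = m at *
  generalize H.verts.ncard = n at *
  have hkn : k ≤ n := by
    have h : (2 * m + n : ℤ) ≤ n * n := by exact_mod_cast hcl
    have hn' : (0 : ℤ) < n := by exact_mod_cast hn
    by_contra! hlt
    nlinarith
  have hmain : k * (k - 3) ≤ 2 * ((m : ℤ) - n) := by nlinarith
  have hmainR : (k : ℝ) * (k - 3) ≤ 2 * ((m : ℝ) - n) := by exact_mod_cast hmain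
  have hs : 2 * (k : ℝ) - 3 ≤ √(9 + 8 * c) := Real.le_sqrt_of_sq_le (by nlinarith)
  linarith
end
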